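/- arXiv:1107.0124 — 2 statements merged into one kernel-verified Lean document; each statement's English description precedes it below -/
import Mathlib

section
/- (Berger–Wang formula.) Let d ≥ 1 and let {S_i}_{i∈I} be a family of d×d complex matrices, indexed by an arbitrary nonempty set I, which is bounded in norm. Then ρ(S) = ρ̂(S), i.e. limsup_{n→∞} sup_{w∈I^n} ρ(S_w)^{1/n} = limsup_{n→∞} sup_{w∈I^n} ‖S_w‖^{1/n}. -/
open Filter Topology MeasureTheory

/-- Operator norm on `d × d` complex matrices induced by the Euclidean norm on `ℂ^d`. -/
noncomputable def opNorm {d : ℕ} (A : Matrix (Fin d) (Fin d) ℂ) : ℝ :=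
  ‖Matrix.toEuclideanCLM (𝕜 := ℂ) A‖

/-- Spectral radius of a complex matrix, as a real number. -/
noncomputable def specRad {d : ℕ} (A : Matrix (Fin d) (Fin d) ℂ) : ℝ :=
  (spectralRadius ℂ A).toReal

/-- `prodS S x n = S_{i_n} ⋯ S_{i_1}` where `i_k = x (k-1)`. -/
noncomputable def prodS {d : ℕ} {I : Type*} (S : I → Matrix (Fin d) (Fin d) ℂ)
    (x : ℕ → I) : ℕ → Matrix (Fin d) (Fin d) ℂ
  | 0 => 1
  | n + 1 => S (x n) * prodS S x n

open scoped Matrix.Norms.L2Operator Pointwise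
open Polynomial

open Pointwise in
lemma growth {R : Type*} [NormedRing R] (J : Ideal R) (F : ℕ → Ideal R)
    (hF : ∀ j, ∀ x ∈ J, ∀ y ∈ F j, x * y ∈ F (j + 1)) (k : ℕ) (hJ : F k = ⊥) (X : Set R) (C K : ℝ)
    (hC : 0 ≤ C) (hK : 1 ≤ K) (hX : ∀ x ∈ X, ∃ b, ‖b‖ ≤ C ∧ x - b ∈ J ∧ ‖x - b‖ ≤ K) (m : ℕ) :
    ∀ p ∈ X ^ m, ∀ j ≤ k, ∀ y ∈ F j, ‖p * y‖ ≤ K ^ (k - j) * (C + 1) ^ m * ‖y‖ := by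
  induction m with
  | zero =>
    intro p hp j hj y hy
    simp at hp
    subst hp
    simp
    exact le_mul_of_one_le_left (norm_nonneg _) (one_le_pow₀ hK)
  | succ m ih =>
    intro p hp j hj y hy
    rcases hj.eq_or_lt with rfl | hj
    · rw [hJ] at hy
      simp at hy; subst hy; simp
    rw [pow_succ] at hp
    obtain ⟨q, hq, x, hx, rfl⟩ := Set.mem_mul.1 hp
    obtain ⟨b, hb, hxb, hxK⟩ := hX x hx
    have e : q * x * y = q * (b * y) + q * ((x - b) * y) := by noncomm_ring
    rw [e]
    have h1 := ih q hq j hj.le (b * y) (Ideal.mul_mem_left _ _ hy)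
    have h2 := ih q hq (j+1) hj ((x - b) * y) (hF _ _ hxb _ hy)
    have e1 : K ^ (k - j) = K ^ (k - (j + 1)) * K := by
      rw [← pow_succ]; congr 1; omega
    have h3 : ‖b * y‖ ≤ C * ‖y‖ := (norm_mul_le _ _).trans (by gcongr)
    have h4 : ‖(x - b) * y‖ ≤ K * ‖y‖ := (norm_mul_le _ _).trans (by gcongr)
    calc _ ≤ _ := norm_add_le _ _
      _ ≤ K ^ (k - j) * (C + 1) ^ m * (C * ‖y‖) + K ^ (k - (j + 1)) * (C + 1) ^ m * (K * ‖y‖) := by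
        refine add_le_add (h1.trans ?_) (h2.trans ?_) <;> gcongr
      _ = _ := by rw [e1]; ring

lemma trace_le {d : ℕ} (A : Matrix (Fin d) (Fin d) ℂ) (r : ℝ)
    (h : ∀ x ∈ spectrum ℂ A, ‖x‖ ≤ r) (hr : 0 ≤ r) : ‖A.trace‖ ≤ d * r := by
  rw [Matrix.trace_eq_sum_roots_charpoly]
  refine (norm_multiset_sum_le _).trans ?_
  have := Multiset.sum_le_card_nsmul (A.charpoly.roots.map (fun x => ‖x‖)) r (by
    intro x hx
    obtain ⟨y, hy, rfl⟩ := Multiset.mem_map.1 hx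
    apply h y
    rw [Matrix.mem_spectrum_iff_isRoot_charpoly]
    exact isRoot_of_mem_roots hy)
  refine this.trans ?_
  rw [nsmul_eq_mul, Multiset.card_map]
  have := A.charpoly.card_roots'
  rw [Matrix.charpoly_natDegree_eq_dim, Fintype.card_fin] at this
  gcongr

lemma nilp {d : ℕ} (A : Matrix (Fin d) (Fin d) ℂ) (h : ∀ p : ℂ[X], (A * aeval A p).trace = 0) :
    IsNilpotent A := by
  obtain ⟨q, hq, hnd⟩ := A.charpoly.exists_eq_pow_rootMultiplicity_mul_and_not_dvd
    A.charpoly_monic.ne_zero 0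
  generalize A.charpoly.rootMultiplicity 0 = k at hq
  simp only [map_zero, sub_zero] at hq hnd
  have hc : IsCoprime (X ^ (k+1)) q := (((irreducible_X).coprime_iff_not_dvd).2 hnd).pow_left
  obtain ⟨u, v, huv⟩ := hc
  have h0 : aeval A (X ^ k * q) = 0 := by rw [← hq]; exact Matrix.aeval_self_charpoly A
  have htr : (aeval A (u * X ^ (k+1))).trace = 0 := by
    have := h (u * X ^ k)
    rw [← this]; congr 1
    rw [show u * X ^ (k+1) = X * (u * X ^ k) by ring, map_mul, aeval_X]
  have e1 : aeval A (u * X ^ (k+1)) + aeval A (v * q) = 1 := by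
    rw [← map_add, huv, map_one]
  have e2 : aeval A (u * X ^ (k+1)) * aeval A (v * q) = 0 := by
    rw [← map_mul, show u * X ^ (k+1) * (v * q) = (u * v * X) * (X ^ k * q) by ring, map_mul, h0,
      mul_zero]
  have e3 : aeval A ((X : ℂ[X])^k) * aeval A (v * q) = 0 := by
    rw [← map_mul, show X ^ k * (v * q) = v * (X ^ k * q) by ring, map_mul, h0, mul_zero]
  have e4 : aeval A ((X : ℂ[X])^k) = A ^ k := by simp
  generalize aeval A (u * X ^ (k+1)) = E at *
  generalize aeval A (v * q) = E' at *
  have hid : E * E = E := by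
    have := congrArg (E * ·) e1
    simpa only [mul_add, e2, add_zero, mul_one] using this
  have hz : E = 0 := by
    have h1 : IsIdempotentElem (Matrix.toLin' E) := by
      unfold IsIdempotentElem
      conv_rhs => rw [← hid, Matrix.toLin'_mul]
      rfl
    have := LinearMap.IsIdempotentElem.eq_zero_of_trace_eq_zero h1 (by simpa using htr)
    simpa using this
  refine ⟨k, ?_⟩
  rw [hz, zero_add] at e1
  rwa [e1, e4, mul_one] at e3

lemma mem_jac {d : ℕ} (𝒜 : Subalgebra ℂ (Matrix (Fin d) (Fin d) ℂ)) (a : 𝒜)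
    (h : ∀ c : 𝒜, ((a : Matrix (Fin d) (Fin d) ℂ) * c).trace = 0) :
    a ∈ Ideal.jacobson (⊥ : Ideal 𝒜) := by
  rw [Ideal.mem_jacobson_iff]
  intro y
  have hn : IsNilpotent ((y * a : 𝒜) : Matrix (Fin d) (Fin d) ℂ) := by
    apply nilp
    intro p
    have := h (aeval (y * a) p * y)
    have e : aeval ((y * a : 𝒜) : Matrix (Fin d) (Fin d) ℂ) p = ((aeval (y * a) p : 𝒜) : _) :=
      (Polynomial.aeval_algHom_apply 𝒜.val (y * a) p)
    rw [← this, e]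
    simp only [MulMemClass.coe_mul]
    rw [mul_assoc, Matrix.trace_mul_comm, mul_assoc]
  have hn' : IsNilpotent (y * a) := by
    obtain ⟨k, hk⟩ := hn
    exact ⟨k, Subtype.ext (by simpa using hk)⟩
  obtain ⟨z, hz⟩ := (IsNilpotent.isUnit_add_one hn').exists_left_inv
  refine ⟨z, ?_⟩
  rw [mul_add, mul_one, ← mul_assoc] at hz
  rw [hz, sub_self]
  exact zero_mem _

lemma bdd_mod {d : ℕ} (𝒜 : Subalgebra ℂ (Matrix (Fin d) (Fin d) ℂ))
    (G : Submonoid (Matrix (Fin d) (Fin d) ℂ))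
    (hG : Subalgebra.toSubmodule 𝒜 = Submodule.span ℂ (G : Set (Matrix (Fin d) (Fin d) ℂ)))
    (ht : ∀ g ∈ G, ‖g.trace‖ ≤ d) :
    ∃ C : ℝ, 0 ≤ C ∧ ∀ g : 𝒜, (g : Matrix (Fin d) (Fin d) ℂ) ∈ G →
      ∃ b : 𝒜, ‖b‖ ≤ C ∧ g - b ∈ Ideal.jacobson (⊥ : Ideal 𝒜) := by
  obtain ⟨f, hfG, hfs, -⟩ := Submodule.exists_fun_fin_finrank_span_eq ℂ
    (G : Set (Matrix (Fin d) (Fin d) ℂ))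
  let Φ : 𝒜 →ₗ[ℂ] (_ → ℂ) := LinearMap.pi fun i =>
    (Matrix.traceLinearMap (Fin d) ℂ ℂ) ∘ₗ (LinearMap.mulRight ℂ (f i)) ∘ₗ 𝒜.val.toLinearMap
  have hΦ : ∀ a i, Φ a i = ((a : Matrix (Fin d) (Fin d) ℂ) * f i).trace := fun a i => rfl
  obtain ⟨σ, hσ⟩ := LinearMap.exists_rightInverse_of_surjective Φ.rangeRestrict
    (LinearMap.range_rangeRestrict Φ)
  let σ' : Φ.range →L[ℂ] Matrix (Fin d) (Fin d) ℂ :=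
    LinearMap.toContinuousLinearMap (𝒜.val.toLinearMap ∘ₗ σ)
  refine ⟨‖σ'‖ * d, by positivity, fun g hg => ⟨σ (Φ.rangeRestrict g), ?_, ?_⟩⟩
  · refine (σ'.le_opNorm (Φ.rangeRestrict g)).trans ?_
    gcongr
    change ‖Φ g‖ ≤ d
    rw [pi_norm_le_iff_of_nonneg (by positivity)]
    intro i
    rw [hΦ]
    exact ht _ (G.mul_mem hg (hfG i))
  · apply mem_jac
    set a := g - σ (Φ.rangeRestrict g) with ha
    have h0 : Φ a = 0 := by
      have := LinearMap.congr_fun hσ (Φ.rangeRestrict g)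
      have h2 := congrArg Subtype.val this
      simp at h2
      rw [ha, map_sub, h2, sub_self]
    intro c
    have hc : (c : Matrix (Fin d) (Fin d) ℂ) ∈ Submodule.span ℂ (Set.range f) := by
      rw [hfs, ← hG]; exact c.2
    generalize (c : Matrix (Fin d) (Fin d) ℂ) = c at hc
    induction hc using Submodule.span_induction with
    | mem x hx => obtain ⟨i, rfl⟩ := hx; rw [← hΦ, h0]; rfl
    | zero => simp
    | add x y _ _ hx hy => rw [mul_add, Matrix.trace_add, hx, hy, add_zero]
    | smul t x _ hx => rw [mul_smul_comm, Matrix.trace_smul, hx, smul_zero]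

lemma mem_closure_pow {M : Type*} [Monoid M] (s : Set M) (g : M) (hg : g ∈ Submonoid.closure s) :
    ∃ n : ℕ, g ∈ s ^ n := by
  induction hg using Submonoid.closure_induction with
  | mem x hx => exact ⟨1, by simpa using hx⟩
  | one => exact ⟨0, by simp⟩
  | mul x y _ _ hx hy =>
    obtain ⟨n, hn⟩ := hx
    obtain ⟨m, hm⟩ := hy
    exact ⟨n + m, by rw [pow_add]; exact Set.mul_mem_mul hn hm⟩

lemma norm_setpow_le {R : Type*} [NormedRing R] [NormOneClass R] (s : Set R) (C : ℝ) (hC : 0 ≤ C)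
    (hs : ∀ a ∈ s, ‖a‖ ≤ C) (n : ℕ) : ∀ a ∈ s ^ n, ‖a‖ ≤ C ^ n := by
  induction n with
  | zero => intro a ha; simp at ha; simp [ha]
  | succ n ih =>
    intro a ha
    rw [pow_succ] at ha
    obtain ⟨q, hq, x, hx, rfl⟩ := Set.mem_mul.1 ha
    refine (norm_mul_le _ _).trans ?_
    rw [pow_succ]
    exact mul_le_mul (ih q hq) (hs x hx) (norm_nonneg _) (by positivity)

lemma core {d : ℕ} [NeZero d] (s : Set (Matrix (Fin d) (Fin d) ℂ)) (B : ℝ) (hB0 : 0 ≤ B)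
    (hB : ∀ a ∈ s, ‖a‖ ≤ B)
    (hs : ∀ n : ℕ, ∀ a ∈ s ^ n, ‖a.trace‖ ≤ d) :
    ∃ C : ℝ, 1 ≤ C ∧ ∀ n : ℕ, ∃ K : ℝ, 1 ≤ K ∧ ∀ m : ℕ, ∀ a ∈ s ^ (n * m), ‖a‖ ≤ K * C ^ m := by
  let 𝒜 := Algebra.adjoin ℂ s
  let G := Submonoid.closure s
  have hsA : ∀ n : ℕ, s ^ n ⊆ (𝒜 : Set (Matrix (Fin d) (Fin d) ℂ)) := by
    intro n
    induction n with
    | zero => intro x hx; simp at hx; subst hx; exact 𝒜.one_mem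
    | succ n ih =>
      rw [pow_succ]
      rintro _ ⟨x, hx, y, hy, rfl⟩
      exact 𝒜.mul_mem (ih hx) (Algebra.subset_adjoin hy)
  have hsG : ∀ n : ℕ, s ^ n ⊆ (G : Set (Matrix (Fin d) (Fin d) ℂ)) := by
    intro n
    induction n with
    | zero => intro x hx; simp at hx; subst hx; exact G.one_mem
    | succ n ih =>
      rw [pow_succ]
      rintro _ ⟨x, hx, y, hy, rfl⟩
      exact G.mul_mem (ih hx) (Submonoid.subset_closure hy)
  obtain ⟨C, hC0, hC⟩ := bdd_mod 𝒜 G (Algebra.adjoin_eq_span ℂ s) (by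
    intro g hg
    obtain ⟨n, hn⟩ := mem_closure_pow s g hg
    exact hs n g hn)
  have : IsArtinianRing 𝒜 := IsArtinianRing.of_finite ℂ 𝒜
  obtain ⟨k, hk⟩ := IsArtinianRing.isNilpotent_jacobson_bot (R := 𝒜)
  set J := Ideal.jacobson (⊥ : Ideal 𝒜) with hJ
  refine ⟨C + 1, by linarith, fun n => ?_⟩
  let K : ℝ := B ^ n + C + 1
  have hK : 1 ≤ K := by have : 0 ≤ B ^ n := by positivity
                        simp only [K]; linarith
  let X : Set 𝒜 := {x | (x : Matrix (Fin d) (Fin d) ℂ) ∈ s ^ n}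
  refine ⟨K ^ k, one_le_pow₀ hK, fun m a ha => ?_⟩
  have key := growth J (fun j => J ^ j) (by
    intro j x hx y hy
    rcases j with _ | j
    · change x * y ∈ (J ^ (0 + 1))
      rw [zero_add, Submodule.pow_one]
      exact J.mul_mem_right _ hx
    · have : (fun j : ℕ => J ^ j) (j + 1 + 1) = J * (fun j : ℕ => J ^ j) (j + 1) :=
        Submodule.pow_succ' J (by simp)
      change x * y ∈ (fun j : ℕ => J ^ j) (j + 1 + 1)
      rw [this]
      exact Ideal.mul_mem_mul hx hy) k hk X C K hC0 hK (by
    intro x hx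
    obtain ⟨b, hb, hxb⟩ := hC x (hsG n hx)
    refine ⟨b, hb, hxb, ?_⟩
    refine (norm_sub_le _ _).trans ?_
    have : ‖x‖ ≤ B ^ n := norm_setpow_le s B hB0 hB n _ hx
    simp only [K]; linarith) m
  have hX : (Subtype.val : 𝒜 → _) '' X = s ^ n := by
    ext x
    constructor
    · rintro ⟨y, hy, rfl⟩; exact hy
    · intro hx; exact ⟨⟨x, hsA n hx⟩, hx, rfl⟩
  rw [pow_mul, ← hX] at ha
  have : (Subtype.val : 𝒜 → _) '' X = 𝒜.val '' X := rfl
  rw [this, ← Set.image_pow] at ha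
  obtain ⟨p, hp, rfl⟩ := ha
  have := key p hp 0 (Nat.zero_le _) 1 (by
    change (1 : 𝒜) ∈ J ^ 0
    rw [Submodule.pow_zero]; exact Submodule.one_le.1 le_rfl)
  rw [mul_one, Nat.sub_zero] at this
  refine this.trans ?_
  have h1 : ‖(1 : 𝒜)‖ = 1 := by
    change ‖(1 : Matrix (Fin d) (Fin d) ℂ)‖ = 1
    exact norm_one
  rw [h1, mul_one]

lemma core2 {d : ℕ} [NeZero d] (s : Set (Matrix (Fin d) (Fin d) ℂ)) (B : ℝ) (hB1 : 1 ≤ B)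
    (hB : ∀ a ∈ s, ‖a‖ ≤ B) (hs : ∀ n : ℕ, ∀ a ∈ s ^ n, ‖a.trace‖ ≤ d) (t : ℝ) (ht : 1 < t) :
    ∃ D : ℝ, 1 ≤ D ∧ ∀ N : ℕ, ∀ a ∈ s ^ N, ‖a‖ ≤ D * t ^ N := by
  obtain ⟨C, hC1, hC⟩ := core s B (by linarith) hB hs
  obtain ⟨n, hn⟩ := pow_unbounded_of_one_lt C ht
  have hn0 : 0 < n := by
    rcases Nat.eq_zero_or_pos n with rfl | h
    · simp at hn; linarith
    · exact h
  obtain ⟨K, hK1, hK⟩ := hC n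
  refine ⟨K * B ^ n, one_le_mul_of_one_le_of_one_le hK1 (one_le_pow₀ hB1), fun N a ha => ?_⟩
  rw [← Nat.div_add_mod N n, pow_add] at ha
  obtain ⟨x, hx, y, hy, rfl⟩ := Set.mem_mul.1 ha
  have h1 := hK _ x hx
  have h2 := norm_setpow_le s B (by linarith) hB _ y hy
  have h3 : B ^ (N % n) ≤ B ^ n := pow_le_pow_right₀ hB1 (Nat.mod_lt _ hn0).le
  have h4 : C ^ (N / n) ≤ t ^ N := by
    calc C ^ (N / n) ≤ (t ^ n) ^ (N / n) := by gcongr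
      _ = t ^ (n * (N / n)) := (pow_mul _ _ _).symm
      _ ≤ t ^ N := pow_le_pow_right₀ ht.le (Nat.mul_div_le _ _)
  calc ‖x * y‖ ≤ ‖x‖ * ‖y‖ := norm_mul_le _ _
    _ ≤ (K * t ^ N) * B ^ n := by
      refine mul_le_mul (h1.trans ?_) (h2.trans h3) (norm_nonneg _) (by positivity)
      gcongr
    _ = _ := by ring

lemma prodS_congr {d : ℕ} {I : Type*} (S : I → Matrix (Fin d) (Fin d) ℂ) (x y : ℕ → I) (n : ℕ)
    (h : ∀ k < n, x k = y k) : prodS S x n = prodS S y n := by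
  induction n with
  | zero => rfl
  | succ n ih =>
    rw [prodS, prodS, ih (fun k hk => h k (by omega)), h n (by omega)]

lemma prodS_mem {d : ℕ} {I : Type*} (S : I → Matrix (Fin d) (Fin d) ℂ) (x : ℕ → I) (n : ℕ) :
    prodS S x n ∈ (Set.range S) ^ n := by
  induction n with
  | zero => simp [prodS]
  | succ n ih => rw [prodS, pow_succ']; exact Set.mul_mem_mul ⟨_, rfl⟩ ih

lemma exists_prodS {d : ℕ} {I : Type*} [Nonempty I] (S : I → Matrix (Fin d) (Fin d) ℂ) (n : ℕ) :
    ∀ A ∈ (Set.range S) ^ n, ∃ x, prodS S x n = A := by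
  induction n with
  | zero => intro A hA; simp at hA; subst hA; exact ⟨fun _ => Classical.arbitrary I, rfl⟩
  | succ n ih =>
    intro A hA
    rw [pow_succ'] at hA
    obtain ⟨_, ⟨i, rfl⟩, B, hB, rfl⟩ := Set.mem_mul.1 hA
    obtain ⟨x, rfl⟩ := ih B hB
    refine ⟨Function.update x n i, ?_⟩
    rw [prodS, prodS_congr S (Function.update x n i) x n
      (fun k hk => Function.update_of_ne hk.ne _ _), Function.update_self]

lemma specRad_le {d : ℕ} [NeZero d] (A : Matrix (Fin d) (Fin d) ℂ) : specRad A ≤ ‖A‖ := by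
  have := spectrum.spectralRadius_le_nnnorm (𝕜 := ℂ) A
  exact ENNReal.toReal_le_of_le_ofReal (norm_nonneg _) (by rwa [ofReal_norm_eq_enorm])

lemma spec_ne_top {d : ℕ} [NeZero d] (A : Matrix (Fin d) (Fin d) ℂ) : spectralRadius ℂ A ≠ ⊤ :=
  ne_top_of_le_ne_top ENNReal.coe_ne_top (spectrum.spectralRadius_le_nnnorm (𝕜 := ℂ) A)

lemma norm_le_specRad {d : ℕ} [NeZero d] (A : Matrix (Fin d) (Fin d) ℂ) (x : ℂ)
    (hx : x ∈ spectrum ℂ A) : ‖x‖ ≤ specRad A := by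
  have : (‖x‖₊ : ENNReal) ≤ spectralRadius ℂ A :=
    le_iSup₂ (f := fun (k : ℂ) (_ : k ∈ spectrum ℂ A) => (‖k‖₊ : ENNReal)) x hx
  exact ENNReal.toReal_mono (spec_ne_top A) this

lemma specRad_pow_le {d : ℕ} [NeZero d] (A : Matrix (Fin d) (Fin d) ℂ) (n : ℕ) (hn : n ≠ 0) :
    specRad A ^ n ≤ specRad (A ^ n) := by
  have := spectrum.spectralRadius_pow_le (𝕜 := ℂ) A n hn
  have := ENNReal.toReal_mono (spec_ne_top _) this
  rwa [ENNReal.toReal_pow] at this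

/-- **The Berger–Wang formula.** For a bounded family of `d × d` complex matrices, the
generalized spectral radius equals the joint spectral radius.  The supremum over words
`w ∈ I^n` is expressed as the supremum over all switching signals `x : ℕ → I` (only the
first `n` letters of the signal matter in `prodS S x n`). -/
theorem berger_wang {d : ℕ} (hd : 1 ≤ d) {I : Type*} [Nonempty I]
    (S : I → Matrix (Fin d) (Fin d) ℂ) (hbdd : ∃ C : ℝ, ∀ i : I, opNorm (S i) ≤ C) :
    Filter.limsup
        (fun n : ℕ => ⨆ x : ℕ → I, specRad (prodS S x n) ^ (1 / (n : ℝ))) Filter.atTop =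
      Filter.limsup
        (fun n : ℕ => ⨆ x : ℕ → I, opNorm (prodS S x n) ^ (1 / (n : ℝ))) Filter.atTop := by
  have : NeZero d := ⟨by omega⟩
  have hop : ∀ A : Matrix (Fin d) (Fin d) ℂ, opNorm A = ‖A‖ := fun A => rfl
  simp only [hop] at *
  obtain ⟨B₀, hB₀⟩ := hbdd
  set B := max B₀ 1
  have hB1 : 1 ≤ B := le_max_right _ _
  have hB : ∀ a ∈ Set.range S, ‖a‖ ≤ B := by
    rintro _ ⟨i, rfl⟩; exact (hB₀ i).trans (le_max_left _ _)
  have hs0 : ∀ A : Matrix (Fin d) (Fin d) ℂ, 0 ≤ specRad A := fun A => ENNReal.toReal_nonneg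
  have hroot : ∀ (y u : ℝ) (n : ℕ), n ≠ 0 → 0 ≤ y → 0 ≤ u → y ≤ u ^ n → y ^ (1 / (n : ℝ)) ≤ u := by
    intro y u n hn hy hu h
    calc y ^ (1 / (n : ℝ)) ≤ (u ^ n) ^ (1 / (n : ℝ)) := by gcongr
      _ = u := by rw [one_div]; exact Real.pow_rpow_inv_natCast hu hn
  have hbB : ∀ (n : ℕ) x, ‖prodS S x n‖ ^ (1 / (n : ℝ)) ≤ B := by
    intro n x
    rcases eq_or_ne n 0 with rfl | hn
    · simpa using hB1
    exact hroot _ _ n hn (norm_nonneg _) (by linarith)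
      (norm_setpow_le _ B (by linarith) hB n _ (prodS_mem S x n))
  have hab : ∀ (n : ℕ) x, specRad (prodS S x n) ^ (1 / (n : ℝ)) ≤ ‖prodS S x n‖ ^ (1 / (n : ℝ)) :=
    fun n x => Real.rpow_le_rpow (hs0 _) (specRad_le _) (by positivity)
  have hbdb : ∀ n : ℕ, BddAbove (Set.range fun x => ‖prodS S x n‖ ^ (1 / (n : ℝ))) := fun n =>
    ⟨B, by rintro _ ⟨x, rfl⟩; exact hbB n x⟩
  have hbda : ∀ n : ℕ, BddAbove (Set.range fun x => specRad (prodS S x n) ^ (1 / (n : ℝ))) :=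
    fun n => ⟨B, by rintro _ ⟨x, rfl⟩; exact (hab n x).trans (hbB n x)⟩
  set a : ℕ → ℝ := fun n : ℕ => ⨆ x : ℕ → I, specRad (prodS S x n) ^ (1 / (n : ℝ)) with ha
  set b : ℕ → ℝ := fun n : ℕ => ⨆ x : ℕ → I, ‖prodS S x n‖ ^ (1 / (n : ℝ)) with hb
  have hale : ∀ n, a n ≤ b n := fun n => ciSup_mono (hbdb n) (hab n)
  have hbl : ∀ n, b n ≤ B := fun n => ciSup_le (hbB n)
  have ha0 : ∀ n, 0 ≤ a n := fun n => Real.iSup_nonneg fun x => Real.rpow_nonneg (hs0 _) _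
  have hbddb : IsBoundedUnder (· ≤ ·) atTop b := isBoundedUnder_of ⟨B, hbl⟩
  have hbdda : IsBoundedUnder (· ≤ ·) atTop a := isBoundedUnder_of ⟨B, fun n => (hale n).trans (hbl n)⟩
  have hcoa : IsCoboundedUnder (· ≤ ·) atTop a :=
    (isBoundedUnder_of ⟨0, ha0⟩ : IsBoundedUnder (· ≥ ·) atTop a).isCoboundedUnder_le
  have hcob : IsCoboundedUnder (· ≤ ·) atTop b :=
    (isBoundedUnder_of ⟨0, fun n => (ha0 n).trans (hale n)⟩ :
      IsBoundedUnder (· ≥ ·) atTop b).isCoboundedUnder_le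
  apply le_antisymm
  · exact limsup_le_limsup (Eventually.of_forall hale) hcoa hbddb
  apply le_of_forall_gt_imp_ge_of_dense
  intro u hu
  obtain ⟨r, hr, hru⟩ := exists_between hu
  have hlim0 : 0 ≤ limsup a atTop :=
    le_limsup_of_frequently_le (Eventually.of_forall ha0).frequently hbdda
  have hr0 : 0 < r := hlim0.trans_lt hr
  have hev := eventually_lt_of_limsup_lt hr hbdda
  obtain ⟨n₀, hn₀⟩ := eventually_atTop.1 hev
  -- every word has spectral radius at most `r ^ n`
  have hspec : ∀ n : ℕ, n ≠ 0 → ∀ A ∈ (Set.range S) ^ n, specRad A ≤ r ^ n := by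
    intro n hn A hA
    set m := n₀ + 1
    have hm : m ≠ 0 := by omega
    have hnm : n * m ≠ 0 := Nat.mul_ne_zero hn hm
    have hge : n₀ ≤ n * m := by
      have : m ≤ n * m := Nat.le_mul_of_pos_left _ (Nat.pos_of_ne_zero hn)
      omega
    have hAm : A ^ m ∈ (Set.range S) ^ (n * m) := by
      rw [pow_mul]; exact Set.pow_mem_pow hA
    obtain ⟨x, hx⟩ := exists_prodS S _ _ hAm
    have h1 : specRad (A ^ m) ^ (1 / ((n * m : ℕ) : ℝ)) ≤ r := by
      rw [← hx]
      exact (le_ciSup (hbda (n * m)) x).trans (hn₀ _ hge).le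
    have h2 : specRad (A ^ m) ≤ r ^ (n * m) := by
      calc specRad (A ^ m) = (specRad (A ^ m) ^ (1 / ((n * m : ℕ) : ℝ))) ^ (n * m) := by
            rw [one_div, Real.rpow_inv_natCast_pow (hs0 _) hnm]
        _ ≤ _ := by gcongr; exact Real.rpow_nonneg (hs0 _) _
    rw [pow_mul] at h2
    exact le_of_pow_le_pow_left₀ hm (by positivity) ((specRad_pow_le A m hm).trans h2)
  have hpow : ∀ n : ℕ, ∀ A ∈ (Set.range S) ^ n,
      ((r⁻¹ : ℝ) : ℂ) ^ n • A ∈ (Set.range fun i => ((r⁻¹ : ℝ) : ℂ) • S i) ^ n := by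
    intro n
    induction n with
    | zero => intro A hA; simpa using hA
    | succ n ih =>
      intro A hA
      rw [pow_succ] at hA
      obtain ⟨x, hx, _, ⟨i, rfl⟩, rfl⟩ := Set.mem_mul.1 hA
      rw [pow_succ (Set.range _)]
      refine Set.mem_mul.2 ⟨_, ih x hx, _, ⟨i, rfl⟩, ?_⟩
      rw [smul_mul_smul_comm, ← pow_succ]
  have hpow' : ∀ n : ℕ, ∀ A ∈ (Set.range fun i => ((r⁻¹ : ℝ) : ℂ) • S i) ^ n,
      ∃ A' ∈ (Set.range S) ^ n, A = ((r⁻¹ : ℝ) : ℂ) ^ n • A' := by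
    intro n
    induction n with
    | zero => intro A hA; exact ⟨A, by simpa using hA, by simp⟩
    | succ n ih =>
      intro A hA
      rw [pow_succ] at hA
      obtain ⟨x, hx, _, ⟨i, rfl⟩, rfl⟩ := Set.mem_mul.1 hA
      obtain ⟨x', hx', rfl⟩ := ih x hx
      refine ⟨x' * S i, ?_, ?_⟩
      · rw [pow_succ]; exact Set.mul_mem_mul hx' ⟨i, rfl⟩
      · rw [pow_succ]; exact smul_mul_smul_comm _ _ _ _
  have hnr : ‖((r⁻¹ : ℝ) : ℂ)‖ = r⁻¹ := by
    rw [Complex.norm_real, Real.norm_of_nonneg (by positivity)]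
  have ht : 1 < u / r := (one_lt_div hr0).2 hru
  obtain ⟨D, hD1, hD⟩ := core2 (Set.range fun i => ((r⁻¹ : ℝ) : ℂ) • S i) (max (r⁻¹ * B) 1)
    (le_max_right _ _) (by
      rintro _ ⟨i, rfl⟩
      refine le_trans ?_ (le_max_left _ _)
      rw [norm_smul, hnr]
      gcongr
      exact hB _ ⟨i, rfl⟩) (by
      intro n A hA
      obtain ⟨A', hA', rfl⟩ := hpow' n A hA
      rcases eq_or_ne n 0 with rfl | hn
      · simp at hA'; subst hA'; simp
      have h1 := trace_le A' (r ^ n) (fun x hx => (norm_le_specRad A' x hx).trans (hspec n hn A' hA'))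
        (by positivity)
      rw [Matrix.trace_smul, norm_smul, norm_pow, hnr]
      calc r⁻¹ ^ n * ‖A'.trace‖ ≤ r⁻¹ ^ n * (d * r ^ n) := by gcongr
        _ = d := by rw [inv_pow]; field_simp) (u / r) ht
  have hu0 : 0 < u := hr0.trans hru
  have hfin : ∀ n : ℕ, n ≠ 0 → b n ≤ D ^ (1 / (n : ℝ)) * u := by
    intro n hn
    apply ciSup_le
    intro x
    have h1 := hD n _ (hpow n _ (prodS_mem S x n))
    rw [norm_smul, norm_pow, hnr] at h1
    have h2 : ‖prodS S x n‖ ≤ D * u ^ n := by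
      rw [inv_pow, div_pow, inv_mul_le_iff₀ (by positivity)] at h1
      refine h1.trans (le_of_eq ?_)
      field_simp
    calc ‖prodS S x n‖ ^ (1 / (n : ℝ)) ≤ (D * u ^ n) ^ (1 / (n : ℝ)) := by gcongr
      _ = _ := by
        rw [Real.mul_rpow (by linarith) (by positivity)]
        congr 1
        rw [one_div]; exact Real.pow_rpow_inv_natCast hu0.le hn
  have htend : Tendsto (fun n : ℕ => D ^ (1 / (n : ℝ)) * u) atTop (𝓝 u) := by
    have h1 : Tendsto (fun n : ℕ => D ^ (1 / (n : ℝ))) atTop (𝓝 (D ^ (0 : ℝ))) :=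
      (Real.continuous_const_rpow (by linarith)).continuousAt.tendsto.comp
        tendsto_one_div_atTop_nhds_zero_nat
    simpa using h1.mul_const u
  rw [← htend.limsup_eq]
  refine limsup_le_limsup ?_ hcob htend.isBoundedUnder_le
  filter_upwards [eventually_ne_atTop 0] with n hn using hfin n hn
end

section
/- Let d ≥ 1, let I be a metric space, let S : I → Matrix d d ℂ be continuous, and let Λ ⊆ Σ_I^+ be a nonempty compact θ_+-invariant subset. Then S is Λ-absolutely asymptotically stable (i.e. S_{i_n}···S_{i_1} → 0 as n → ∞ for every i(·) ∈ Λ) if and only if ρ(S|Λ) < 1. -/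
open Filter Topology MeasureTheory

/-- `Λ` is invariant under the one-sided shift `θ₊`. -/
def ShiftInv {I : Type*} (Λ : Set (ℕ → I)) : Prop :=
  ∀ x ∈ Λ, (fun n => x (n + 1)) ∈ Λ

/-- Generalized spectral radius of `S` restricted to `Λ`. -/
noncomputable def gsr {d : ℕ} {I : Type*} (S : I → Matrix (Fin d) (Fin d) ℂ)
    (Λ : Set (ℕ → I)) : ℝ :=
  Filter.limsup (fun n : ℕ => ⨆ x : Λ, specRad (prodS S x.1 n) ^ (1 / (n : ℝ))) Filter.atTop


/-- Contiguous products. -/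
def cp {M : Type*} [Monoid M] (A : ℕ → M) (i : ℕ) : ℕ → M
  | 0 => 1
  | n + 1 => A (i + n) * cp A i n

lemma cp_add {M : Type*} [Monoid M] (A : ℕ → M) (i m n : ℕ) :
    cp A i (m + n) = cp A (i + m) n * cp A i m := by
  induction n with
  | zero => simp [cp]
  | succ n ih => rw [← add_assoc, cp, ih, cp, mul_assoc, add_assoc]

lemma cp_shift {M : Type*} [Monoid M] (A : ℕ → M) (i j n : ℕ) :
    cp (fun k => A (i + k)) j n = cp A (i + j) n := by
  induction n with
  | zero => simp [cp]
  | succ n ih => simp only [cp, ih, add_assoc]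

lemma cp_block {M : Type*} [Monoid M] (A : ℕ → M) (N i n : ℕ) :
    cp (fun k => cp A (k * N) N) i n = cp A (i * N) (n * N) := by
  induction n with
  | zero => simp [cp]
  | succ n ih =>
    rw [cp, ih, add_mul n, one_mul, cp_add, add_mul]

lemma cp_map {M N : Type*} [Monoid M] [Monoid N] (f : M →* N) (A : ℕ → M) (i n : ℕ) :
    f (cp A i n) = cp (fun k => f (A k)) i n := by
  induction n with
  | zero => simp [cp]
  | succ n ih => simp only [cp, map_mul, ih]

section alg
variable {F : Type*} [Field F]

/-- Factoring through dimension `r`. -/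
def Fac {m n : ℕ} (r : ℕ) (A : Matrix (Fin m) (Fin n) F) : Prop :=
  ∃ (W : Matrix (Fin m) (Fin r) F) (V : Matrix (Fin r) (Fin n) F), A = W * V

lemma Fac.mul_left {m n l r : ℕ} {A : Matrix (Fin m) (Fin n) F} (h : Fac r A)
    (B : Matrix (Fin l) (Fin m) F) : Fac r (B * A) := by
  obtain ⟨W, V, rfl⟩ := h
  exact ⟨B * W, V, by rw [Matrix.mul_assoc]⟩

lemma Fac.mul_right {m n l r : ℕ} {A : Matrix (Fin m) (Fin n) F} (h : Fac r A)
    (B : Matrix (Fin n) (Fin l) F) : Fac r (A * B) := by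
  obtain ⟨W, V, rfl⟩ := h
  exact ⟨W, V * B, by rw [Matrix.mul_assoc]⟩

lemma fac_of_det {r : ℕ} (A : Matrix (Fin (r + 1)) (Fin (r + 1)) F) (h : A.det = 0) : Fac r A := by
  obtain ⟨v, hv, hvA⟩ := Matrix.exists_vecMul_eq_zero_iff.2 h
  obtain ⟨k, hk⟩ : ∃ k, v k ≠ 0 := by
    by_contra hcon
    push Not at hcon
    exact hv (funext hcon)
  refine ⟨Matrix.of fun i j => if i = k then -(v (k.succAbove j)) / v k else
    if i = k.succAbove j then 1 else 0, A.submatrix k.succAbove id, ?_⟩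
  ext a b
  revert a
  rw [Fin.forall_iff_succAbove k]
  have h1 := congrFun hvA b
  simp only [Matrix.vecMul, dotProduct, Pi.zero_apply] at h1
  rw [Fin.sum_univ_succAbove _ k] at h1
  constructor
  · simp only [Matrix.mul_apply, if_true, Matrix.of_apply, Matrix.submatrix_apply, id]
    have : ∑ x, -v (k.succAbove x) / v k * A (k.succAbove x) b
        = -(∑ x, v (k.succAbove x) * A (k.succAbove x) b) / v k := by
      rw [neg_div, Finset.sum_div, ← Finset.sum_neg_distrib]
      refine Finset.sum_congr rfl fun x _ => ?_
      ring
    rw [this, eq_div_iff hk]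
    linear_combination h1
  · intro i
    simp [Matrix.mul_apply, Fin.succAbove_ne]

lemma cp_fac {d q : ℕ} (W : ℕ → Matrix (Fin d) (Fin q) F) (V : ℕ → Matrix (Fin q) (Fin d) F)
    (i n : ℕ) : cp (fun k => W k * V k) i (n + 1)
      = W (i + n) * cp (fun k => V (k + 1) * W k) i n * V i := by
  induction n with
  | zero => simp [cp]
  | succ n ih =>
    rw [cp, ih]
    conv_rhs => rw [cp]
    simp only [Matrix.mul_assoc, add_assoc]

lemma pow_fac {d q : ℕ} (W : Matrix (Fin d) (Fin q) F) (V : Matrix (Fin q) (Fin d) F)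
    (Q : Matrix (Fin q) (Fin q) F) (m : ℕ) :
    V * (W * Q * V) ^ m * W = (V * W) * (Q * (V * W)) ^ m := by
  induction m with
  | zero => simp
  | succ m ih =>
    rw [pow_succ', pow_succ']
    have : V * (W * Q * V * (W * Q * V) ^ m) * W = V * W * Q * (V * (W * Q * V) ^ m * W) := by
      simp only [Matrix.mul_assoc]
    rw [this, ih]
    simp only [Matrix.mul_assoc]

/-- `V ↦ det (V * W)` as a multilinear map. -/
noncomputable def detForm {d q : ℕ} (W : Matrix (Fin d) (Fin q) F) :
    MultilinearMap F (fun _ : Fin q => (Fin d → F)) F :=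
  (Matrix.detRowAlternating (n := Fin q) (R := F)).toMultilinearMap.compLinearMap
    (fun _ => Matrix.vecMulLinear W)

lemma detForm_apply {d q : ℕ} (W : Matrix (Fin d) (Fin q) F) (V : Matrix (Fin q) (Fin d) F) :
    detForm W V = (V * W).det := by
  rfl

lemma exists_det_zero {d q : ℕ} (W : ℕ → Matrix (Fin d) (Fin q) F)
    (V : ℕ → Matrix (Fin q) (Fin d) F)
    (hq : 0 < q)
    (hnil : ∀ i n, 1 ≤ n → IsNilpotent (cp (fun k => W k * V k) i n)) :
    ∃ k < Module.finrank F (MultilinearMap F (fun _ : Fin q => (Fin d → F)) F) + 1,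
      (V (k + 1) * W k).det = 0 := by
  set m := Module.finrank F (MultilinearMap F (fun _ : Fin q => (Fin d → F)) F) + 1 with hm
  by_contra hcon
  push Not at hcon
  have hT : ∀ i n, i + n ≤ m → (cp (fun k => V (k + 1) * W k) i n).det ≠ 0 := by
    intro i n
    induction n with
    | zero => intro _; simp [cp]
    | succ n ih =>
      intro h
      rw [cp, Matrix.det_mul]
      exact mul_ne_zero (hcon _ (by omega)) (ih (by omega))
  have hz : ∀ i j, i ≤ j → j < m → (V i * W j).det = 0 := by
    intro i j hij hj
    obtain ⟨n, rfl⟩ := Nat.exists_eq_add_of_le hij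
    obtain ⟨p, hp⟩ := hnil i (n + 1) (by omega)
    rw [cp_fac] at hp
    have h2 := pow_fac (W (i + n)) (V i) (cp (fun k => V (k + 1) * W k) i n) p
    by_contra hne
    have h3 := congrArg Matrix.det h2
    rw [hp, Matrix.det_mul, Matrix.det_pow, Matrix.det_mul] at h3
    have : Nonempty (Fin q) := ⟨⟨0, hq⟩⟩
    simp only [Matrix.mul_zero, Matrix.zero_mul, Matrix.det_zero] at h3
    exact mul_ne_zero hne (pow_ne_zero _ (mul_ne_zero (hT i n (by omega)) hne)) h3.symm
  have hli : LinearIndependent F (fun j : Fin m => detForm (W j)) := by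
    rw [Fintype.linearIndependent_iff]
    intro g hg
    have key : ∀ n, ∀ hn : n < m, g ⟨n, hn⟩ = 0 := by
      intro n
      induction n using Nat.strong_induction_on with
      | _ n ih =>
        intro hn
        have h1 : ∑ j : Fin m, g j * (V (n + 1) * W j).det = 0 := by
          have h0 := DFunLike.congr_fun hg (fun a b => V (n + 1) a b)
          rw [sum_apply] at h0
          exact h0
        rw [Finset.sum_eq_single (⟨n, hn⟩ : Fin m)] at h1
        · simpa [hcon n hn] using h1
        · intro b _ hb
          rcases lt_trichotomy b.1 n with h | h | h
          · rw [ih b.1 h b.2]; simp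
          · exact absurd (Fin.ext h) hb
          · rw [hz (n + 1) b.1 h b.2]; simp
        · simp
    exact fun i => key i.1 i.2
  have := hli.fintype_card_le_finrank
  simp at this
  omega

lemma alg_aux (d r : ℕ) (hr : r ≤ d) : ∃ N, 1 ≤ N ∧ ∀ A : ℕ → Matrix (Fin d) (Fin d) F,
    (∀ i n, 1 ≤ n → IsNilpotent (cp A i n)) → Fac r (cp A 0 N) := by
  induction hr using Nat.decreasingInduction with
  | self =>
    exact ⟨1, le_rfl, fun A _ => ⟨cp A 0 1, 1, by simp⟩⟩
  | of_succ r hr ih =>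
    obtain ⟨N, hN, h⟩ := ih
    set m := Module.finrank F (MultilinearMap F (fun _ : Fin (r + 1) => (Fin d → F)) F) + 1 with hm
    refine ⟨(m + 1) * N, Nat.mul_pos (by omega) hN, fun A hA => ?_⟩
    have hB : ∀ k, Fac (r + 1) (cp A (k * N) N) := by
      intro k
      have := h (fun j => A (k * N + j)) (fun i n hn => by rw [cp_shift]; exact hA _ _ hn)
      rwa [cp_shift] at this
    choose W V hWV using hB
    have hfun : (fun k => cp A (k * N) N) = fun k => W k * V k := funext hWV
    have hnil : ∀ i n, 1 ≤ n → IsNilpotent (cp (fun k => W k * V k) i n) := by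
      intro i n hn
      rw [← hfun, cp_block]
      exact hA _ _ (Nat.mul_pos hn hN)
    obtain ⟨k, hk, hdet⟩ := exists_det_zero W V (Nat.succ_pos r) hnil
    have e : cp A 0 ((m + 1) * N) = cp (fun k => W k * V k) 0 (m + 1) := by
      rw [← hfun, cp_block, Nat.zero_mul]
    rw [e, cp_fac]
    obtain ⟨l, hl⟩ := Nat.exists_eq_add_of_lt hk
    have e2 : m = (k + 1) + l := by omega
    refine Fac.mul_right (Fac.mul_left ?_ _) _
    rw [e2, cp_add]
    refine Fac.mul_left ?_ _
    rw [cp]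
    simp only [Nat.zero_add]
    exact Fac.mul_right (fac_of_det _ hdet) _

lemma alg_main (d : ℕ) : ∃ N, 1 ≤ N ∧ ∀ A : ℕ → Matrix (Fin d) (Fin d) F,
    (∀ i n, 1 ≤ n → IsNilpotent (cp A i n)) → cp A 0 N = 0 := by
  obtain ⟨N, hN, h⟩ := alg_aux (F := F) d 0 (Nat.zero_le _)
  refine ⟨N, hN, fun A hA => ?_⟩
  obtain ⟨W, V, e⟩ := h A hA
  rw [e]
  ext i j
  simp [Matrix.mul_apply]

end alg

/-- Sequences of subexponential growth along the hyperfilter. -/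
noncomputable def OO : Subring (ℕ → ℂ) where
  carrier := {z | ∀ r : ℝ, 1 < r → ∀ᶠ n in (hyperfilter ℕ : Filter ℕ), ‖z n‖ ≤ r ^ n}
  mul_mem' := by
    intro a b ha hb r hr
    have hs : 1 < Real.sqrt r := by
      rw [Real.lt_sqrt (by norm_num)]; simpa using hr
    filter_upwards [ha _ hs, hb _ hs] with n h1 h2
    calc ‖(a * b) n‖ = ‖a n‖ * ‖b n‖ := norm_mul _ _
      _ ≤ Real.sqrt r ^ n * Real.sqrt r ^ n := by gcongr
      _ = r ^ n := by rw [← mul_pow, Real.mul_self_sqrt (by linarith)]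
  one_mem' := by
    intro r hr
    filter_upwards with n
    simpa using one_le_pow₀ hr.le
  add_mem' := by
    intro a b ha hb r hr
    have hs : 1 < Real.sqrt r := by
      rw [Real.lt_sqrt (by norm_num)]; simpa using hr
    have h2 : ∀ᶠ n in (hyperfilter ℕ : Filter ℕ), 2 ≤ Real.sqrt r ^ n :=
      Nat.hyperfilter_le_atTop ((tendsto_pow_atTop_atTop_of_one_lt hs).eventually_ge_atTop 2)
    filter_upwards [ha _ hs, hb _ hs, h2] with n h1 h2 h3
    calc ‖(a + b) n‖ ≤ ‖a n‖ + ‖b n‖ := norm_add_le _ _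
      _ ≤ 2 * Real.sqrt r ^ n := by linarith
      _ ≤ Real.sqrt r ^ n * Real.sqrt r ^ n := by gcongr
      _ = r ^ n := by rw [← mul_pow, Real.mul_self_sqrt (by linarith)]
  zero_mem' := by
    intro r hr
    filter_upwards with n
    have : 0 ≤ r ^ n := by positivity
    simpa using this
  neg_mem' := by
    intro a ha r hr
    filter_upwards [ha r hr] with n h
    simpa using h

/-- Exponentially small sequences. -/
noncomputable def mm : Ideal OO where
  carrier := {z | ∃ r : ℝ, 0 < r ∧ r < 1 ∧ ∀ᶠ n in (hyperfilter ℕ : Filter ℕ), ‖z.1 n‖ ≤ r ^ n}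
  zero_mem' := ⟨1 / 2, by norm_num, by norm_num, by
    filter_upwards with n
    have : (0 : ℝ) ≤ (1 / 2) ^ n := by positivity
    simpa using this⟩
  add_mem' := by
    rintro a b ⟨r, hr0, hr1, hr⟩ ⟨s, hs0, hs1, hs⟩
    set t := max r s with ht
    have ht0 : 0 < t := lt_max_of_lt_left hr0
    have ht1 : t < 1 := max_lt hr1 hs1
    have hq1 : Real.sqrt t < 1 := by
      rw [Real.sqrt_lt' one_pos]; simpa using ht1
    have hq0 : 0 < Real.sqrt t := Real.sqrt_pos.2 ht0
    have h2 : ∀ᶠ n in (hyperfilter ℕ : Filter ℕ), Real.sqrt t ^ n ≤ 1 / 2 :=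
      Nat.hyperfilter_le_atTop
        ((tendsto_pow_atTop_nhds_zero_of_lt_one hq0.le hq1).eventually_le_const (by norm_num))
    refine ⟨Real.sqrt t, hq0, hq1, ?_⟩
    filter_upwards [hr, hs, h2] with n h1 h2 h3
    have e : t ^ n = Real.sqrt t ^ n * Real.sqrt t ^ n := by
      rw [← mul_pow, Real.mul_self_sqrt ht0.le]
    have h4 : r ^ n ≤ t ^ n := by gcongr; exact le_max_left _ _
    have h5 : s ^ n ≤ t ^ n := by gcongr; exact le_max_right _ _
    have h6 : Real.sqrt t ^ n * Real.sqrt t ^ n ≤ Real.sqrt t ^ n * (1 / 2) := by gcongr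
    calc ‖(a + b).1 n‖ ≤ ‖a.1 n‖ + ‖b.1 n‖ := norm_add_le _ _
      _ ≤ Real.sqrt t ^ n := by linarith
  smul_mem' := by
    rintro c a ⟨r, hr0, hr1, hr⟩
    have hq1 : Real.sqrt r < 1 := by
      rw [Real.sqrt_lt' one_pos]; simpa using hr1
    have hq0 : 0 < Real.sqrt r := Real.sqrt_pos.2 hr0
    refine ⟨Real.sqrt r, hq0, hq1, ?_⟩
    filter_upwards [hr, c.2 (Real.sqrt r)⁻¹ ((one_lt_inv₀ hq0).2 hq1)] with n h1 h2
    calc ‖(c • a).1 n‖ = ‖c.1 n‖ * ‖a.1 n‖ := norm_mul _ _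
      _ ≤ (Real.sqrt r)⁻¹ ^ n * r ^ n := by gcongr
      _ = Real.sqrt r ^ n := by
        rw [← mul_pow]
        congr 1
        rw [inv_mul_eq_div, Real.div_sqrt]

lemma mem_mm {z : OO} : z ∈ mm ↔
    ∃ r : ℝ, 0 < r ∧ r < 1 ∧ ∀ᶠ n in (hyperfilter ℕ : Filter ℕ), ‖z.1 n‖ ≤ r ^ n := Iff.rfl

lemma mm_max : mm.IsMaximal := by
  rw [Ideal.isMaximal_iff]
  constructor
  · rintro ⟨r, hr0, hr1, hr⟩
    have h2 := (hr.and (Nat.hyperfilter_le_atTop (eventually_ge_atTop 1))).exists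
    obtain ⟨n, h1, h3⟩ := h2
    have h4 : ‖((1 : OO) : ℕ → ℂ) n‖ = 1 := by simp
    rw [h4] at h1
    exact absurd (pow_lt_one₀ hr0.le hr1 (by omega : n ≠ 0)) (not_lt.2 h1)
  · intro J z hJ hz hzJ
    have hz' : ∀ r : ℝ, 0 < r → r < 1 →
        ∀ᶠ n in (hyperfilter ℕ : Filter ℕ), r ^ n < ‖z.1 n‖ := by
      intro r h0 h1
      by_contra hcon
      refine hz ⟨r, h0, h1, ?_⟩
      have := Ultrafilter.frequently_iff_eventually.1 (not_eventually.1 hcon)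
      simpa using this
    let w : OO := ⟨fun n => (z.1 n)⁻¹, by
      intro r hr
      filter_upwards [hz' r⁻¹ (by positivity) (inv_lt_one_of_one_lt₀ hr)] with n hn
      rw [norm_inv]
      rw [inv_pow] at hn
      exact inv_le_of_inv_le₀ (by positivity) hn.le⟩
    have h1 : 1 - w * z ∈ mm := by
      refine ⟨1 / 2, by norm_num, by norm_num, ?_⟩
      filter_upwards [hz' (1 / 2) (by norm_num) (by norm_num)] with n hn
      have hne : z.1 n ≠ 0 := by
        intro h0
        rw [h0, norm_zero] at hn
        have : (0 : ℝ) < (1 / 2) ^ n := by positivity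
        linarith
      have : (1 - w * z).1 n = 0 := by
        change 1 - (z.1 n)⁻¹ * z.1 n = 0
        rw [inv_mul_cancel₀ hne, sub_self]
      rw [this, norm_zero]
      positivity
    have := J.add_mem (hJ h1) (J.mul_mem_left w hzJ)
    simpa using this

/-- Evaluation at `n`. -/
noncomputable def evO (n : ℕ) : OO →+* ℂ := (Pi.evalRingHom (fun _ : ℕ => ℂ) n).comp OO.subtype

lemma charpoly_coeff_bound {d : ℕ} (A : Matrix (Fin d) (Fin d) ℂ) (hA : spectralRadius ℂ A ≠ ⊤)
    (B : ℝ) (hB : specRad A ≤ B) (i : ℕ) :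
    ‖A.charpoly.coeff i‖ ≤ B ^ (d - i) * (d.choose i) := by
  have h := Polynomial.coeff_le_of_roots_le (p := A.charpoly) (f := RingHom.id ℂ) (B := B) i
    A.charpoly_monic (IsAlgClosed.splits _) (by
      intro z hz
      rw [Polynomial.map_id] at hz
      have hz2 := Matrix.mem_spectrum_iff_isRoot_charpoly.2 (Polynomial.isRoot_of_mem_roots hz)
      refine le_trans ?_ hB
      have : (‖z‖₊ : ENNReal) ≤ spectralRadius ℂ A := by
        unfold spectralRadius
        exact le_iSup₂ (f := fun k (_ : k ∈ spectrum ℂ A) => (‖k‖₊ : ENNReal)) z hz2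
      have := ENNReal.toReal_mono hA this
      simpa [specRad] using this)
  rwa [Polynomial.map_id, Matrix.charpoly_natDegree_eq_dim, Fintype.card_fin] at h

lemma nil_of_small {d : ℕ} (A : Matrix (Fin d) (Fin d) OO)
    (hfin : ∀ B : Matrix (Fin d) (Fin d) ℂ, spectralRadius ℂ B ≠ ⊤)
    (γ : ℝ) (h0 : 0 < γ) (h1 : γ < 1)
    (h : ∀ᶠ n in (hyperfilter ℕ : Filter ℕ), specRad (A.map (evO n)) ≤ γ ^ n) :
    IsNilpotent (A.map (Ideal.Quotient.mk mm)) := by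
  have hc : ∀ i < d, A.charpoly.coeff i ∈ mm := by
    intro i hi
    have hq1 : Real.sqrt γ < 1 := by
      rw [Real.sqrt_lt' one_pos]; simpa using h1
    have hq0 : 0 < Real.sqrt γ := Real.sqrt_pos.2 h0
    refine ⟨Real.sqrt γ, hq0, hq1, ?_⟩
    have h2 : ∀ᶠ n in (hyperfilter ℕ : Filter ℕ), Real.sqrt γ ^ n * (d.choose i) ≤ 1 := by
      have := (tendsto_pow_atTop_nhds_zero_of_lt_one hq0.le hq1).mul_const (d.choose i : ℝ)
      rw [zero_mul] at this
      exact Nat.hyperfilter_le_atTop (this.eventually_le_const (by norm_num))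
    filter_upwards [h, h2] with n hn hn2
    have e : (A.charpoly.coeff i).1 n = (A.map (evO n)).charpoly.coeff i := by
      rw [Matrix.charpoly_map, Polynomial.coeff_map]
      rfl
    rw [e]
    refine (charpoly_coeff_bound _ (hfin _) _ hn i).trans ?_
    have e3 : γ ^ n = Real.sqrt γ ^ n * Real.sqrt γ ^ n := by
      rw [← mul_pow, Real.mul_self_sqrt h0.le]
    have h4 : (γ ^ n) ^ (d - i) ≤ γ ^ n :=
      pow_le_of_le_one (by positivity) (pow_le_one₀ h0.le h1.le) (by omega)
    calc (γ ^ n) ^ (d - i) * (d.choose i) ≤ γ ^ n * (d.choose i) := by gcongr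
      _ = Real.sqrt γ ^ n * (Real.sqrt γ ^ n * (d.choose i)) := by rw [e3]; ring
      _ ≤ Real.sqrt γ ^ n * 1 := by gcongr
      _ = _ := mul_one _
  have := mm_max
  have hcp : (A.map (Ideal.Quotient.mk mm)).charpoly = Polynomial.X ^ d := by
    have : Nontrivial (OO ⧸ mm) := Ideal.Quotient.nontrivial_iff.2 this.ne_top
    ext i
    rw [Polynomial.coeff_X_pow]
    have hdeg : (A.map (Ideal.Quotient.mk mm)).charpoly.natDegree = d := by
      rw [Matrix.charpoly_natDegree_eq_dim, Fintype.card_fin]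
    rcases lt_trichotomy i d with hi | hi | hi
    · rw [Matrix.charpoly_map, Polynomial.coeff_map, if_neg hi.ne]
      exact Ideal.Quotient.eq_zero_iff_mem.2 (hc i hi)
    · subst hi
      have := (A.map (Ideal.Quotient.mk mm)).charpoly_monic
      rw [Polynomial.Monic, Polynomial.leadingCoeff, hdeg] at this
      simpa using this
    · rw [if_neg hi.ne', Polynomial.coeff_eq_zero_of_natDegree_lt (by omega)]
  have h3 := Matrix.aeval_self_charpoly (A.map (Ideal.Quotient.mk mm))
  rw [hcp] at h3
  exact ⟨d, by simpa using h3⟩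

section an
attribute [local instance] Matrix.linftyOpNormedRing Matrix.linftyOpNormedAlgebra

lemma linf_entry {d : ℕ} (A : Matrix (Fin d) (Fin d) ℂ) (i j : Fin d) : ‖A i j‖ ≤ ‖A‖ := by
  rw [Matrix.linfty_opNorm_def]
  have h1 : ‖A i j‖₊ ≤ ∑ j, ‖A i j‖₊ :=
    Finset.single_le_sum (f := fun j => ‖A i j‖₊) (fun _ _ => zero_le) (Finset.mem_univ j)
  have h2 := Finset.le_sup (f := fun i => ∑ j, ‖A i j‖₊) (Finset.mem_univ i)
  exact_mod_cast h1.trans h2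

lemma linf_le {d : ℕ} (A : Matrix (Fin d) (Fin d) ℂ) (c : ℝ) (hc : 0 ≤ c)
    (h : ∀ i j, ‖A i j‖ ≤ c) : ‖A‖ ≤ d * c := by
  rw [Matrix.linfty_opNorm_def]
  lift c to NNReal using hc
  have : (Finset.univ.sup fun i => ∑ j, ‖A i j‖₊) ≤ d * c := by
    refine Finset.sup_le fun i _ => ?_
    refine (Finset.sum_le_card_nsmul _ _ c fun j _ => ?_).trans ?_
    · exact_mod_cast h i j
    · simp
  exact_mod_cast this

lemma linf_one {d : ℕ} : ‖(1 : Matrix (Fin d) (Fin d) ℂ)‖ ≤ 1 := by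
  rcases Nat.eq_zero_or_pos d with h | h
  · subst h
    rw [Subsingleton.elim (1 : Matrix (Fin 0) (Fin 0) ℂ) 0]; simp
  · have : Nonempty (Fin d) := ⟨⟨0, h⟩⟩
    rw [norm_one]

lemma specRad_ne_top {d : ℕ} (hd : 1 ≤ d) (A : Matrix (Fin d) (Fin d) ℂ) :
    spectralRadius ℂ A ≠ ⊤ := by
  have : Nonempty (Fin d) := ⟨⟨0, hd⟩⟩
  exact ne_top_of_le_ne_top ENNReal.coe_ne_top (spectrum.spectralRadius_le_nnnorm (𝕜 := ℂ) A)

lemma specRad_le_norm {d : ℕ} (hd : 1 ≤ d) (A : Matrix (Fin d) (Fin d) ℂ) :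
    specRad A ≤ ‖A‖ := by
  have : Nonempty (Fin d) := ⟨⟨0, hd⟩⟩
  have := ENNReal.toReal_mono ENNReal.coe_ne_top (spectrum.spectralRadius_le_nnnorm (𝕜 := ℂ) A)
  simpa [specRad] using this

lemma specRad_smul_le {d : ℕ} (hd : 1 ≤ d) (A : Matrix (Fin d) (Fin d) ℂ) (c : ℝ) (hc : 0 < c) :
    specRad ((c : ℂ) • A) ≤ c * specRad A := by
  have hc' : (c : ℂ) ≠ 0 := by exact_mod_cast hc.ne'
  have h : spectralRadius ℂ ((c : ℂ) • A) ≤ ENNReal.ofReal c * spectralRadius ℂ A := by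
    refine iSup₂_le fun k hk => ?_
    have e := spectrum.unit_smul_eq_smul (R := ℂ) A (Units.mk0 (c : ℂ) hc')
    have hk' : k ∈ spectrum ℂ ((Units.mk0 (c : ℂ) hc') • A) := hk
    rw [e] at hk'
    obtain ⟨l, hl, rfl⟩ := hk'
    have h1 : (‖l‖₊ : ENNReal) ≤ spectralRadius ℂ A :=
      le_iSup₂ (f := fun k (_ : k ∈ spectrum ℂ A) => (‖k‖₊ : ENNReal)) l hl
    have h2 : (‖(Units.mk0 (c : ℂ) hc') • l‖₊ : ENNReal) = ENNReal.ofReal c * ‖l‖₊ := by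
      rw [Units.smul_def, Units.val_mk0, nnnorm_smul, ENNReal.coe_mul]
      congr 1
      rw [← enorm_eq_nnnorm, ← ofReal_norm]
      simp [abs_of_pos hc]
    change (‖(Units.mk0 (c : ℂ) hc') • l‖₊ : ENNReal) ≤ _
    rw [h2]
    gcongr
  have := ENNReal.toReal_mono (ENNReal.mul_ne_top ENNReal.ofReal_ne_top (specRad_ne_top hd A)) h
  rwa [ENNReal.toReal_mul, ENNReal.toReal_ofReal hc.le] at this

variable {d : ℕ} {I : Type*}

lemma prodS_eq (S : I → Matrix (Fin d) (Fin d) ℂ) (x : ℕ → I) (i n : ℕ) :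
    prodS S (fun k => x (i + k)) n = cp (fun k => S (x k)) i n := by
  induction n with
  | zero => rfl
  | succ n ih => rw [prodS, cp, ih]

lemma prodS_eq0 (S : I → Matrix (Fin d) (Fin d) ℂ) (x : ℕ → I) (n : ℕ) :
    prodS S x n = cp (fun k => S (x k)) 0 n := by
  simpa using prodS_eq S x 0 n

lemma prodS_add (S : I → Matrix (Fin d) (Fin d) ℂ) (x : ℕ → I) (m n : ℕ) :
    prodS S x (m + n) = prodS S (fun k => x (m + k)) n * prodS S x m := by
  rw [prodS_eq, prodS_eq0, prodS_eq0, cp_add, Nat.zero_add]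

lemma shift_mem {Λ : Set (ℕ → I)} (hinv : ShiftInv Λ) {x : ℕ → I} (hx : x ∈ Λ) (i : ℕ) :
    (fun k => x (i + k)) ∈ Λ := by
  induction i with
  | zero => simpa using hx
  | succ i ih =>
    have := hinv _ ih
    convert this using 2 with k
    ring_nf

lemma decay (S : I → Matrix (Fin d) (Fin d) ℂ) {Λ : Set (ℕ → I)} (hinv : ShiftInv Λ)
    (K : ℝ) (hK1 : 1 ≤ K) (hK : ∀ x ∈ Λ, ∀ n, ‖prodS S x n‖ ≤ K ^ n)
    (N : ℕ) (c : ℝ) (hc0 : 0 < c) (hc : c < 1)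
    (h : ∀ x ∈ Λ, ∃ k, 1 ≤ k ∧ k ≤ N ∧ ‖prodS S x k‖ ≤ c) :
    ∃ C q : ℝ, 0 < C ∧ 0 < q ∧ q < 1 ∧ ∀ x ∈ Λ, ∀ m, ‖prodS S x m‖ ≤ C * q ^ m := by
  obtain ⟨q, hq0, hq1, hqN⟩ : ∃ q : ℝ, 0 < q ∧ q < 1 ∧ c ≤ q ^ N := by
    rcases Nat.eq_zero_or_pos N with h0 | h0
    · exact ⟨1 / 2, by norm_num, by norm_num, by rw [h0]; simpa using hc.le⟩
    · refine ⟨c ^ (1 / (N : ℝ)), by positivity, Real.rpow_lt_one hc0.le hc (by positivity), ?_⟩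
      rw [← Real.rpow_natCast, ← Real.rpow_mul hc0.le]
      have : (N : ℝ) ≠ 0 := by positivity
      rw [one_div_mul_cancel this, Real.rpow_one]
  refine ⟨K ^ N / q ^ N, q, by positivity, hq0, hq1, fun x hx m => ?_⟩
  induction m using Nat.strong_induction_on generalizing x with
  | _ m ih =>
    rcases lt_or_ge m N with hm | hm
    · refine (hK x hx m).trans ?_
      have h1 : K ^ m ≤ K ^ N := pow_le_pow_right₀ hK1 hm.le
      have h2 : q ^ N ≤ q ^ m := pow_le_pow_of_le_one hq0.le hq1.le hm.le
      rw [div_mul_eq_mul_div, le_div_iff₀ (by positivity)]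
      gcongr
    · obtain ⟨k, hk1, hkN, hk⟩ := h x hx
      obtain ⟨l, rfl⟩ := Nat.exists_eq_add_of_le (hkN.trans hm)
      rw [prodS_add]
      refine (norm_mul_le _ _).trans ?_
      have h1 := ih l (by omega) _ (shift_mem hinv hx k)
      have h2 : c ≤ q ^ k := hqN.trans (pow_le_pow_of_le_one hq0.le hq1.le hkN)
      calc _ ≤ (K ^ N / q ^ N * q ^ l) * q ^ k := by
            gcongr
            exact hk.trans h2
        _ = _ := by rw [pow_add]; ring

lemma prodS_cont [TopologicalSpace I] (S : I → Matrix (Fin d) (Fin d) ℂ) (hS : Continuous S)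
    (n : ℕ) : Continuous (fun x : ℕ → I => prodS S x n) := by
  induction n with
  | zero => exact continuous_const
  | succ n ih =>
    simp only [prodS]
    exact (hS.comp (continuous_apply n)).mul ih

lemma exists_K [TopologicalSpace I] (S : I → Matrix (Fin d) (Fin d) ℂ) (hS : Continuous S)
    {Λ : Set (ℕ → I)} (hcomp : IsCompact Λ) (hinv : ShiftInv Λ) :
    ∃ K : ℝ, 1 ≤ K ∧ ∀ x ∈ Λ, ∀ n, ‖prodS S x n‖ ≤ K ^ n := by
  obtain ⟨K, hK⟩ := hcomp.exists_bound_of_continuousOn (f := fun x : ℕ → I => S (x 0))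
    (hS.comp (continuous_apply 0)).continuousOn
  refine ⟨max K 1, le_max_right _ _, fun x hx n => ?_⟩
  induction n with
  | zero => simpa [prodS] using linf_one
  | succ n ih =>
    rw [prodS, pow_succ']
    refine (norm_mul_le _ _).trans ?_
    gcongr
    have := hK _ (shift_mem hinv hx n)
    exact this.trans (le_max_left _ _)

lemma stable_of_decay (S : I → Matrix (Fin d) (Fin d) ℂ) {Λ : Set (ℕ → I)}
    (h : ∃ C q : ℝ, 0 < C ∧ 0 < q ∧ q < 1 ∧ ∀ x ∈ Λ, ∀ m, ‖prodS S x m‖ ≤ C * q ^ m)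
    (x : ℕ → I) (hx : x ∈ Λ) : Tendsto (fun n : ℕ => prodS S x n) atTop (𝓝 0) := by
  obtain ⟨C, q, hC, hq0, hq1, h⟩ := h
  refine squeeze_zero_norm (h x hx) ?_
  simpa using (tendsto_pow_atTop_nhds_zero_of_lt_one hq0.le hq1).const_mul C

lemma decay_of_stable [TopologicalSpace I] (S : I → Matrix (Fin d) (Fin d) ℂ) (hS : Continuous S)
    {Λ : Set (ℕ → I)} (hcomp : IsCompact Λ) (hinv : ShiftInv Λ)
    (h : ∀ x ∈ Λ, Tendsto (fun n : ℕ => prodS S x n) atTop (𝓝 0)) :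
    ∃ C q : ℝ, 0 < C ∧ 0 < q ∧ q < 1 ∧ ∀ x ∈ Λ, ∀ m, ‖prodS S x m‖ ≤ C * q ^ m := by
  obtain ⟨K, hK1, hK⟩ := exists_K S hS hcomp hinv
  have h1 : ∀ x ∈ Λ, ∃ k, 1 ≤ k ∧ ‖prodS S x k‖ < 1 / 2 := by
    intro x hx
    have h2 := (h x hx).norm
    rw [norm_zero] at h2
    obtain ⟨k, hk, hk1⟩ := ((h2.eventually_lt_const (by norm_num : (0 : ℝ) < 1 / 2)).and
      (eventually_ge_atTop 1)).exists
    exact ⟨k, hk1, hk⟩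
  let U : ℕ → Set (ℕ → I) := fun k => {x | 1 ≤ k ∧ ‖prodS S x k‖ < 1 / 2}
  have hU : ∀ k, IsOpen (U k) := by
    intro k
    refine IsOpen.and isOpen_const ?_
    exact isOpen_lt (prodS_cont S hS k).norm continuous_const
  obtain ⟨t, ht⟩ := hcomp.elim_finite_subcover U hU (by
    intro x hx
    obtain ⟨k, hk⟩ := h1 x hx
    exact Set.mem_iUnion.2 ⟨k, hk⟩)
  refine decay S hinv K hK1 hK (t.sup id) (1 / 2) (by norm_num) (by norm_num) fun x hx => ?_
  obtain ⟨k, hk⟩ := Set.mem_iUnion.1 (ht hx)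
  obtain ⟨hkt, hk⟩ := Set.mem_iUnion.1 hk
  exact ⟨k, hk.1, Finset.le_sup (f := id) hkt, hk.2.le⟩

lemma specRad_nonneg (A : Matrix (Fin d) (Fin d) ℂ) : 0 ≤ specRad A := ENNReal.toReal_nonneg

lemma gsr_lt_of_decay (hd : 1 ≤ d) (S : I → Matrix (Fin d) (Fin d) ℂ) {Λ : Set (ℕ → I)}
    (hne : Λ.Nonempty)
    (h : ∃ C q : ℝ, 0 < C ∧ 0 < q ∧ q < 1 ∧ ∀ x ∈ Λ, ∀ m, ‖prodS S x m‖ ≤ C * q ^ m) :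
    gsr S Λ < 1 := by
  obtain ⟨C, q, hC, hq0, hq1, h⟩ := h
  have : Nonempty Λ := hne.to_subtype
  have hlim : Tendsto (fun n : ℕ => C ^ (1 / (n : ℝ)) * q) atTop (𝓝 q) := by
    have h1 : Tendsto (fun n : ℕ => 1 / (n : ℝ)) atTop (𝓝 0) := tendsto_one_div_atTop_nhds_zero_nat
    have h2 := (((Real.continuous_const_rpow hC.ne').tendsto 0).comp h1).mul_const q
    simpa [Function.comp_def] using h2
  obtain ⟨s, hs1, hs2⟩ := exists_between hq1
  refine lt_of_le_of_lt (limsup_le_of_le ?_ ?_) hs2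
  · refine IsBoundedUnder.isCoboundedUnder_le ⟨0, ?_⟩
    rw [eventually_map]
    filter_upwards with n
    exact Real.iSup_nonneg fun x => Real.rpow_nonneg (specRad_nonneg _) _
  · filter_upwards [hlim.eventually_le_const hs1, eventually_ge_atTop 1] with n hn hn1
    refine ciSup_le fun x => le_trans ?_ hn
    have h1 := (specRad_le_norm hd _).trans (h x.1 x.2 n)
    have hn0 : (n : ℝ) ≠ 0 := by positivity
    calc specRad (prodS S x.1 n) ^ (1 / (n : ℝ)) ≤ (C * q ^ n) ^ (1 / (n : ℝ)) :=
          Real.rpow_le_rpow (specRad_nonneg _) h1 (by positivity)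
      _ = C ^ (1 / (n : ℝ)) * q := by
        rw [Real.mul_rpow hC.le (by positivity), ← Real.rpow_natCast, ← Real.rpow_mul hq0.le,
          mul_one_div_cancel hn0, Real.rpow_one]

lemma specRad_of_gsr (hd : 1 ≤ d) (S : I → Matrix (Fin d) (Fin d) ℂ) {Λ : Set (ℕ → I)}
    (K : ℝ) (hK1 : 1 ≤ K) (hK : ∀ x ∈ Λ, ∀ n, ‖prodS S x n‖ ≤ K ^ n) (hne : Λ.Nonempty)
    (h : gsr S Λ < 1) : ∃ γ : ℝ, 0 < γ ∧ γ < 1 ∧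
      ∀ᶠ n : ℕ in atTop, ∀ x ∈ Λ, specRad (prodS S x n) ≤ γ ^ n := by
  have : Nonempty Λ := hne.to_subtype
  obtain ⟨s, hs1, hs2⟩ := exists_between (max_lt h (zero_lt_one (α := ℝ)))
  have hb : ∀ n : ℕ, 1 ≤ n → ∀ x : Λ, specRad (prodS S x.1 n) ^ (1 / (n : ℝ)) ≤ K := by
    intro n hn x
    have hn0 : (n : ℝ) ≠ 0 := by positivity
    have h1 := (specRad_le_norm hd _).trans (hK x.1 x.2 n)
    calc specRad (prodS S x.1 n) ^ (1 / (n : ℝ)) ≤ (K ^ n) ^ (1 / (n : ℝ)) :=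
          Real.rpow_le_rpow (specRad_nonneg _) h1 (by positivity)
      _ = K := by
        rw [← Real.rpow_natCast, ← Real.rpow_mul (by linarith),
          mul_one_div_cancel hn0, Real.rpow_one]
  refine ⟨s, (le_max_right _ _).trans_lt hs1, hs2, ?_⟩
  have h2 := eventually_lt_of_limsup_lt ((le_max_left _ _).trans_lt hs1) ⟨K, by
    rw [eventually_map]
    filter_upwards [eventually_ge_atTop 1] with n hn
    exact ciSup_le (hb n hn)⟩
  filter_upwards [h2, eventually_ge_atTop 1] with n hn hn1 x hx
  have hn0 : (n : ℝ) ≠ 0 := by positivity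
  have h3 : specRad (prodS S x n) ^ (1 / (n : ℝ)) ≤ s :=
    (le_ciSup (f := fun x : Λ => specRad (prodS S x.1 n) ^ (1 / (n : ℝ)))
      ⟨K, by rintro _ ⟨y, rfl⟩; exact hb n hn1 y⟩ ⟨x, hx⟩).trans hn.le
  have h4 := pow_le_pow_left₀ (Real.rpow_nonneg (specRad_nonneg _) _) h3 n
  rwa [← Real.rpow_natCast, ← Real.rpow_mul (specRad_nonneg _), one_div_mul_cancel hn0,
    Real.rpow_one] at h4

lemma cp_smul (c : ℂ) (B : ℕ → Matrix (Fin d) (Fin d) ℂ) (i k : ℕ) :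
    cp (fun j => c • B j) i k = c ^ k • cp B i k := by
  induction k with
  | zero => simp [cp]
  | succ k ih => rw [cp, cp, ih, smul_mul_smul_comm, pow_succ']

lemma exists_R (hd : 1 ≤ d) (S : I → Matrix (Fin d) (Fin d) ℂ) {Λ : Set (ℕ → I)}
    (hinv : ShiftInv Λ) (hne : Λ.Nonempty)
    (K : ℝ) (hK1 : 1 ≤ K) (hK : ∀ x ∈ Λ, ∀ n, ‖prodS S x n‖ ≤ K ^ n)
    (hno : ¬ ∃ C q : ℝ, 0 < C ∧ 0 < q ∧ q < 1 ∧ ∀ x ∈ Λ, ∀ m, ‖prodS S x m‖ ≤ C * q ^ m) :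
    ∃ R : ℝ, 1 ≤ R ∧ (∀ n, ∃ x ∈ Λ, R ^ n / 2 < ‖prodS S x n‖) ∧
      ∀ r : ℝ, 1 < r → ∀ᶠ n : ℕ in atTop, ∀ x ∈ Λ, ‖prodS S x n‖ ≤ r ^ n * R ^ n := by
  have : Nonempty Λ := hne.to_subtype
  have : Nonempty (Fin d) := ⟨⟨0, hd⟩⟩
  set a : ℕ → ℝ := fun n => ⨆ x : Λ, ‖prodS S x.1 n‖ with ha
  have hle : ∀ n, ∀ x ∈ Λ, ‖prodS S x n‖ ≤ a n := fun n x hx =>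
    le_ciSup (f := fun x : Λ => ‖prodS S x.1 n‖)
      ⟨K ^ n, by rintro _ ⟨y, rfl⟩; exact hK _ y.2 n⟩ ⟨x, hx⟩
  have ha1 : ∀ n, 1 ≤ a n := by
    intro n
    rcases Nat.eq_zero_or_pos n with h0 | h0
    · subst h0
      obtain ⟨x, hx⟩ := hne
      refine le_trans ?_ (hle 0 x hx)
      simp [prodS]
    · by_contra hlt
      push Not at hlt
      refine hno (decay S hinv K hK1 hK n (max (a n) (1 / 2)) (lt_max_of_lt_right (by norm_num))
        (max_lt hlt (by norm_num)) fun x hx => ⟨n, h0, le_rfl, (hle n x hx).trans (le_max_left _ _)⟩)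
  have hsub : Subadditive (fun n => Real.log (a n)) := by
    intro m n
    rw [← Real.log_mul (by linarith [ha1 m]) (by linarith [ha1 n])]
    refine Real.log_le_log (by linarith [ha1 (m + n)]) (ciSup_le fun x => ?_)
    rw [prodS_add, mul_comm]
    refine (norm_mul_le _ _).trans ?_
    exact mul_le_mul (hle n _ (shift_mem hinv x.2 m)) (hle m _ x.2) (norm_nonneg _)
      (by linarith [ha1 n])
  have hpos : ∀ n : ℕ, 0 ≤ Real.log (a n) / n := fun n =>
    div_nonneg (Real.log_nonneg (ha1 n)) (Nat.cast_nonneg n)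
  have hbdd : BddBelow (Set.range fun n : ℕ => Real.log (a n) / n) :=
    ⟨0, by rintro _ ⟨n, rfl⟩; exact hpos n⟩
  have hlim := hsub.tendsto_lim hbdd
  have hL0 : 0 ≤ hsub.lim := ge_of_tendsto' hlim hpos
  refine ⟨Real.exp hsub.lim, Real.one_le_exp hL0, fun n => ?_, fun r hr => ?_⟩
  · have h1 : Real.exp hsub.lim ^ n ≤ a n := by
      rcases Nat.eq_zero_or_pos n with h0 | h0
      · subst h0; simpa using ha1 0
      · have h2 := hsub.lim_le_div hbdd h0.ne'
        rw [le_div_iff₀ (by positivity)] at h2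
        rw [← Real.exp_nat_mul, ← Real.le_log_iff_exp_le (by linarith [ha1 n])]
        linarith
    have h3 : Real.exp hsub.lim ^ n / 2 < a n := by
      have : 0 < Real.exp hsub.lim ^ n := by positivity
      linarith
    obtain ⟨x, hx⟩ := exists_lt_of_lt_ciSup h3
    exact ⟨x.1, x.2, hx⟩
  · have h1 : hsub.lim < hsub.lim + Real.log r := by linarith [Real.log_pos hr]
    filter_upwards [hlim.eventually_le_const h1, eventually_ge_atTop 1] with n hn hn1 x hx
    refine (hle n x hx).trans ?_
    have hn0 : (0 : ℝ) < n := by positivity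
    rw [div_le_iff₀ hn0, Real.log_le_iff_le_exp (by linarith [ha1 n])] at hn
    refine hn.trans (le_of_eq ?_)
    rw [add_mul, Real.exp_add, mul_comm, mul_comm (Real.log r), Real.exp_nat_mul,
      mul_comm hsub.lim, Real.exp_nat_mul, Real.exp_log (by linarith)]

lemma hard_dir [TopologicalSpace I] (hd : 1 ≤ d) (S : I → Matrix (Fin d) (Fin d) ℂ)
    (hS : Continuous S) {Λ : Set (ℕ → I)} (hne : Λ.Nonempty) (hcomp : IsCompact Λ)
    (hinv : ShiftInv Λ) (h : gsr S Λ < 1) :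
    ∃ C q : ℝ, 0 < C ∧ 0 < q ∧ q < 1 ∧ ∀ x ∈ Λ, ∀ m, ‖prodS S x m‖ ≤ C * q ^ m := by
  by_contra hno
  obtain ⟨K, hK1, hK⟩ := exists_K S hS hcomp hinv
  obtain ⟨γ, hγ0, hγ1, hγ⟩ := specRad_of_gsr hd S K hK1 hK hne h
  obtain ⟨R, hR1, hRl, hRu⟩ := exists_R hd S hinv hne K hK1 hK hno
  have hR0 : 0 < R := by linarith
  have hmax := mm_max
  letI : Field (OO ⧸ mm) := Ideal.Quotient.field mm
  obtain ⟨M, hM, halg⟩ := alg_main (F := OO ⧸ mm) d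
  choose x hxΛ hx using fun n => hRl (M * n)
  let z : ℕ → Matrix (Fin d) (Fin d) OO := fun k => Matrix.of fun p q =>
    ⟨fun n => (((R⁻¹) ^ n : ℝ) : ℂ) * (cp (fun k => S (x n k)) (k * n) n) p q, by
      intro r hr
      refine Nat.hyperfilter_le_atTop ?_
      filter_upwards [hRu r hr] with n hn
      have h1 := hn _ (shift_mem hinv (hxΛ n) (k * n))
      rw [prodS_eq] at h1
      have h2 := (linf_entry _ p q).trans h1
      rw [norm_mul, Complex.norm_real, Real.norm_of_nonneg (by positivity)]
      calc (R⁻¹) ^ n * _ ≤ (R⁻¹) ^ n * (r ^ n * R ^ n) := by gcongr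
        _ = r ^ n := by
          rw [inv_pow]; field_simp⟩
  have hev : ∀ i k n, (cp z i k).map (evO n)
      = (((((R⁻¹) ^ n) ^ k : ℝ)) : ℂ) • cp (fun k => S (x n k)) (i * n) (k * n) := by
    intro i k n
    have h1 := cp_map ((evO n).mapMatrix (m := Fin d)).toMonoidHom z i k
    have h2 : (fun j => ((evO n).mapMatrix (m := Fin d)).toMonoidHom (z j))
        = fun j => (((R⁻¹) ^ n : ℝ) : ℂ) • cp (fun k => S (x n k)) (j * n) n := by
      funext j
      rfl
    rw [h2, cp_smul, cp_block] at h1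
    rw [Complex.ofReal_pow ((R⁻¹) ^ n) k]
    exact h1
  have hnil : ∀ i k, 1 ≤ k → IsNilpotent ((cp z i k).map (Ideal.Quotient.mk mm)) := by
    intro i k hk
    refine nil_of_small _ (specRad_ne_top hd) γ hγ0 hγ1 (Nat.hyperfilter_le_atTop ?_)
    obtain ⟨n0, hn0⟩ := eventually_atTop.1 hγ
    filter_upwards [eventually_ge_atTop n0] with n hn
    rw [hev]
    refine (specRad_smul_le hd _ _ (by positivity)).trans ?_
    have hkn : n ≤ k * n := Nat.le_mul_of_pos_left n hk
    have h1 := hn0 (k * n) (hn.trans hkn) _ (shift_mem hinv (hxΛ n) (i * n))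
    rw [prodS_eq] at h1
    have h2 : ((R⁻¹) ^ n) ^ k ≤ 1 :=
      pow_le_one₀ (by positivity) (pow_le_one₀ (by positivity) (inv_le_one_of_one_le₀ hR1))
    calc _ ≤ 1 * γ ^ (k * n) := by
          refine mul_le_mul h2 h1 (specRad_nonneg _) zero_le_one
      _ ≤ γ ^ n := by
          rw [one_mul]; exact pow_le_pow_of_le_one hγ0.le hγ1.le hkn
  have hmap : ∀ i k, cp (fun j => (z j).map (Ideal.Quotient.mk mm)) i k
      = (cp z i k).map (Ideal.Quotient.mk mm) := by
    intro i k
    exact (cp_map ((Ideal.Quotient.mk mm).mapMatrix (m := Fin d)).toMonoidHom z i k).symm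
  have h0 := halg (fun j => (z j).map (Ideal.Quotient.mk mm)) (fun i n hn => by
    have h1 := hnil i n hn
    rw [← hmap] at h1
    exact h1)
  have h00 : (cp z 0 M).map (Ideal.Quotient.mk mm) = 0 := by
    rw [← hmap]; exact h0
  have hd0 : (0 : ℝ) < d := by exact_mod_cast hd
  have hent : ∀ p q, ∀ᶠ n in (hyperfilter ℕ : Filter ℕ),
      ‖((cp z 0 M).map (evO n)) p q‖ ≤ 1 / (4 * d) := by
    intro p q
    have h1 : cp z 0 M p q ∈ mm := by
      rw [← Ideal.Quotient.eq_zero_iff_mem]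
      exact congrFun (congrFun h00 p) q
    obtain ⟨r, hr0, hr1, hr⟩ := h1
    filter_upwards [hr, Nat.hyperfilter_le_atTop
      ((tendsto_pow_atTop_nhds_zero_of_lt_one hr0.le hr1).eventually_le_const
        (show (0 : ℝ) < 1 / (4 * d) by positivity))] with n h1 h2
    exact h1.trans h2
  have hall : ∀ᶠ n in (hyperfilter ℕ : Filter ℕ), ∀ p q,
      ‖((cp z 0 M).map (evO n)) p q‖ ≤ 1 / (4 * d) := by
    rw [eventually_all]
    intro p
    rw [eventually_all]
    exact hent p
  obtain ⟨n, hn⟩ := hall.exists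
  have h1 := linf_le _ _ (by positivity) hn
  have h2 := hx n
  rw [prodS_eq0] at h2
  rw [hev, norm_smul, Complex.norm_real, Real.norm_of_nonneg (by positivity), Nat.zero_mul] at h1
  have h3 : (d : ℝ) * (1 / (4 * d)) = 1 / 4 := by field_simp
  rw [h3, ← pow_mul, mul_comm n M, inv_pow, inv_mul_le_iff₀ (by positivity)] at h1
  have : 0 < R ^ (M * n) := by positivity
  linarith

end an

/-- `Λ`-absolute asymptotic stability is equivalent to `ρ(S|Λ) < 1`. -/
theorem abs_asymp_stable_iff_gsr_lt_one {d : ℕ} (hd : 1 ≤ d) {I : Type*} [MetricSpace I]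
    (S : I → Matrix (Fin d) (Fin d) ℂ) (hS : Continuous S)
    (Λ : Set (ℕ → I)) (hne : Λ.Nonempty) (hcomp : IsCompact Λ) (hinv : ShiftInv Λ) :
    (∀ x ∈ Λ, Filter.Tendsto (fun n : ℕ => prodS S x n) Filter.atTop (nhds 0)) ↔
      gsr S Λ < 1 := by
  constructor
  · intro h
    exact gsr_lt_of_decay hd S hne (decay_of_stable S hS hcomp hinv h)
  · intro h x hx
    exact stable_of_decay S (hard_dir hd S hS hne hcomp hinv h) x hx
end
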